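/- Suppose for each i = 1,…,m the functions f_{i,1},…,f_{i,n} : ℝ^d → ℝ are differentiable and L-average smooth, and set f_i = (1/n)Σ_{j=1}^n f_{i,j}. Let η > 0, p ∈ (0,1], b ≥ 1, and let x, x⁺, g, s ∈ ℝ^{m×d}. Define U = ‖(1/m)Σ_{i=1}^m (g(i) − ∇f_i(x(i)))‖² and C = ‖x − 𝟙x̄ᵀ‖² + η²‖s − 𝟙s̄ᵀ‖², and assume the consensus bound ‖x⁺ − 𝟙(x̄⁺)ᵀ‖² ≤ 2C. Then, averaging over all maps ξ : {1,…,m}×{1,…,b} → {1,…,n} (independent uniform mini-batches on every agent), (1−p)·n^{−mb} Σ_{ξ} ‖(1/m)Σ_{i=1}^m [g(i) + (1/b)Σ_{k=1}^b (∇f_{i,ξ(i,k)}(x⁺(i)) − ∇f_{i,ξ(i,k)}(x(i))) − ∇f_i(x⁺(i))]‖² ≤ (1−p)[U + (9L²/(m²b)) C + (3L²/(mb))‖x̄⁺ − x̄‖²]. -/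

import Mathlib

open scoped BigOperators

noncomputable section

/-- Frobenius norm of a matrix represented by its rows (Euclidean norm for vectors). -/
def fnorm {m : ℕ} {E : Type} [NormedAddCommGroup E] (u : Fin m → E) : ℝ :=
  Real.sqrt (∑ i, ‖u i‖ ^ 2)

/-- Average of the rows of a matrix: `ū = (1/m) 𝟙ᵀ u`. -/
def rowAvg {m : ℕ} {E : Type} [AddCommGroup E] [Module ℝ E] (u : Fin m → E) : E :=
  (m : ℝ)⁻¹ • ∑ i, u i

/-- Action of the gossip matrix `W` on the rows of `u`. -/
def gossipMul {m : ℕ} (W : Fin m → Fin m → ℝ) {E : Type} [AddCommGroup E] [Module ℝ E]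
    (u : Fin m → E) : Fin m → E :=
  fun i => ∑ j, W i j • u j

/-- The pair `(u^(k), u^(k-1))` of the Chebyshev-accelerated gossip recursion
`u^(k+1) = (1+η_u) W u^(k) - η_u u^(k-1)` with
`η_u = (1 - √(1-λ₂²))/(1 + √(1-λ₂²))`. -/
def fastMixPair {m : ℕ} (W : Fin m → Fin m → ℝ) (lam : ℝ) {E : Type} [AddCommGroup E]
    [Module ℝ E] (u0 : Fin m → E) : ℕ → (Fin m → E) × (Fin m → E)
  | 0 => (u0, u0)
  | K + 1 =>
      let p := fastMixPair W lam u0 K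
      let etau := (1 - Real.sqrt (1 - lam ^ 2)) / (1 + Real.sqrt (1 - lam ^ 2))
      ((1 + etau) • gossipMul W p.1 - etau • p.2, p.1)

/-- `FastMix(u⁰, K) = u^(K)`. -/
def fastMix {m : ℕ} (W : Fin m → Fin m → ℝ) (lam : ℝ) {E : Type} [AddCommGroup E]
    [Module ℝ E] (u0 : Fin m → E) (K : ℕ) : Fin m → E :=
  (fastMixPair W lam u0 K).1

/-!
Given the iterates, the aggregated estimation error is a deterministic vector plus an average of
`m * b` independent centred samples. Independent centred terms are orthogonal in mean square, so the
samples contribute `1 / (m² b)` times the sum over the agents of one sample's variance, and average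
smoothness bounds each variance by `L² ‖x⁺(i) - x(i)‖²`. Passing from `x(i)` to `x⁺(i)` through
the two row averages splits these displacements into consensus errors and the motion of the average.
-/

section Sampling

open scoped RealInnerProductSpace

variable {ι κ σ E : Type*} [Fintype σ] [NormedAddCommGroup E] [InnerProductSpace ℝ E]

theorem expect_norm_add_sq_of_sum_eq_zero [Nonempty σ] (A : E) {Y : σ → E}
    (hY : ∑ j, Y j = 0) : 𝔼 j, ‖A + Y j‖ ^ 2 = ‖A‖ ^ 2 + 𝔼 j, ‖Y j‖ ^ 2 := by
  have cross : ∑ j, ⟪A, Y j⟫ = 0 := by rw [← inner_sum, hY, inner_zero_right]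
  have cross_mean : 𝔼 j, 2 * ⟪A, Y j⟫ = 0 := by
    rw [Finset.expect_univ, ← Finset.mul_sum, cross, mul_zero, smul_zero]
  simp only [norm_add_sq_real, Finset.expect_add_distrib, Fintype.expect_const, cross_mean,
    add_zero]

theorem expect_norm_sub_sq_le_of_sum_sub_eq_zero [Nonempty σ] {δ : σ → E} {μ : E}
    (hμ : ∑ j, (δ j - μ) = 0) : 𝔼 j, ‖δ j - μ‖ ^ 2 ≤ 𝔼 j, ‖δ j‖ ^ 2 := by
  have pythagoras := expect_norm_add_sq_of_sum_eq_zero μ hμ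
  simp only [add_sub_cancel] at pythagoras
  rw [pythagoras]
  exact le_add_of_nonneg_left (sq_nonneg _)

theorem expect_norm_add_sum_sq_of_sum_eq_zero [Fintype ι] [DecidableEq ι] [Nonempty σ] (A : E)
    (Y : ι → σ → E) (hY : ∀ i, ∑ j, Y i j = 0) :
    𝔼 ξ : ι → σ, ‖A + ∑ i, Y i (ξ i)‖ ^ 2 = ‖A‖ ^ 2 + ∑ i, 𝔼 j, ‖Y i j‖ ^ 2 := by
  refine Fintype.induction_empty_option
    (P := fun α _ => ∀ [DecidableEq α] (A : E) (Y : α → σ → E), (∀ i, ∑ j, Y i j = 0) →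
      𝔼 ξ : α → σ, ‖A + ∑ i, Y i (ξ i)‖ ^ 2 = ‖A‖ ^ 2 + ∑ i, 𝔼 j, ‖Y i j‖ ^ 2)
    ?_ ?_ ?_ ι A Y hY
  · intro α β _ e ih _ A Y hY
    let _ := Fintype.ofEquiv β e.symm
    classical
    rw [← e.sum_comp, ← ih A (fun i => Y (e i)) fun i => hY (e i)]
    refine Fintype.expect_equiv (e.arrowCongr (Equiv.refl σ)).symm _ _ fun ξ => ?_
    simp [← e.sum_comp]
  · intro _ A Y _
    simp
  · intro α _ ih _ A Y hY
    classical
    calc 𝔼 ξ : Option α → σ, ‖A + ∑ i, Y i (ξ i)‖ ^ 2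
        = 𝔼 z : σ × (α → σ), ‖A + Y none z.1 + ∑ i, Y (some i) (z.2 i)‖ ^ 2 :=
          Fintype.expect_equiv Equiv.piOptionEquivProd _ _ fun ξ => by
            simp [Fintype.sum_option, add_assoc]
      _ = 𝔼 j, (‖A + Y none j‖ ^ 2 + ∑ i, 𝔼 k, ‖Y (some i) k‖ ^ 2) := by
          rw [← Finset.univ_product_univ, Finset.expect_product]
          exact Finset.expect_congr rfl fun j _ =>
            ih (A + Y none j) (fun i => Y (some i)) fun i => hY (some i)
      _ = ‖A‖ ^ 2 + ∑ i, 𝔼 j, ‖Y i j‖ ^ 2 := by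
          rw [Finset.expect_add_distrib, Fintype.expect_const,
            expect_norm_add_sq_of_sum_eq_zero A (hY none), Fintype.sum_option, add_assoc]

variable [Fintype ι] [DecidableEq ι] [Fintype κ] [DecidableEq κ]

theorem expect_norm_add_minibatch_sq_of_sum_eq_zero [Nonempty σ] (A : E) {Y : ι → σ → E}
    (hY : ∀ i, ∑ j, Y i j = 0) :
    𝔼 ξ : ι → κ → σ, ‖A + (Fintype.card ι : ℝ)⁻¹ • ∑ i,
        (Fintype.card κ : ℝ)⁻¹ • ∑ k, Y i (ξ i k)‖ ^ 2 =
      ‖A‖ ^ 2 + ((Fintype.card ι : ℝ) ^ 2 * Fintype.card κ)⁻¹ * ∑ i, 𝔼 j, ‖Y i j‖ ^ 2 := by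
  set c : ℝ := (Fintype.card ι : ℝ)⁻¹ * (Fintype.card κ : ℝ)⁻¹ with hc
  have scaled_centred (a : ι × κ) : ∑ j, c • Y a.1 j = 0 := by
    rw [← Finset.smul_sum, hY, smul_zero]
  calc 𝔼 ξ : ι → κ → σ, ‖A + (Fintype.card ι : ℝ)⁻¹ • ∑ i,
        (Fintype.card κ : ℝ)⁻¹ • ∑ k, Y i (ξ i k)‖ ^ 2
      = 𝔼 ζ : ι × κ → σ, ‖A + ∑ a, c • Y a.1 (ζ a)‖ ^ 2 :=
        Fintype.expect_equiv (Equiv.curry ι κ σ).symm _ _ fun ξ => by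
          simp only [Fintype.sum_prod_type, ← Finset.smul_sum, smul_smul, hc,
            Equiv.curry_symm_apply, Function.uncurry]
    _ = ‖A‖ ^ 2 + ∑ a : ι × κ, 𝔼 j, ‖c • Y a.1 j‖ ^ 2 :=
        expect_norm_add_sum_sq_of_sum_eq_zero A (fun (a : ι × κ) j => c • Y a.1 j) scaled_centred
    _ = ‖A‖ ^ 2 + c ^ 2 * Fintype.card κ * ∑ i, 𝔼 j, ‖Y i j‖ ^ 2 := by
        simp only [norm_smul, mul_pow, Real.norm_eq_abs, sq_abs, ← Finset.mul_expect,
          ← Finset.mul_sum, Fintype.sum_prod_type, Finset.sum_const, Finset.card_univ,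
          nsmul_eq_mul]
        ring
    _ = _ := by
        rcases eq_or_ne (Fintype.card κ : ℝ) 0 with hκ | hκ
        · simp [hκ]
        · rw [hc]
          field_simp

theorem expect_norm_minibatch_error_sq_le [Nonempty κ] [Nonempty σ] (e : ι → E) {δ : ι → σ → E}
    {μ : ι → E} (hμ : ∀ i, ∑ j, (δ i j - μ i) = 0) :
    𝔼 ξ : ι → κ → σ, ‖(Fintype.card ι : ℝ)⁻¹ • ∑ i,
        (e i + (Fintype.card κ : ℝ)⁻¹ • ∑ k, δ i (ξ i k) - μ i)‖ ^ 2 ≤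
      ‖(Fintype.card ι : ℝ)⁻¹ • ∑ i, e i‖ ^ 2 +
        ((Fintype.card ι : ℝ) ^ 2 * Fintype.card κ)⁻¹ * ∑ i, 𝔼 j, ‖δ i j‖ ^ 2 := by
  have recenter (i : ι) (ω : κ → σ) :
      e i + (Fintype.card κ : ℝ)⁻¹ • ∑ k, δ i (ω k) - μ i =
        e i + (Fintype.card κ : ℝ)⁻¹ • ∑ k, (δ i (ω k) - μ i) := by
    have hκ : (Fintype.card κ : ℝ) ≠ 0 := Nat.cast_ne_zero.2 Fintype.card_ne_zero
    rw [Finset.sum_sub_distrib, Finset.sum_const, Finset.card_univ, ← Nat.cast_smul_eq_nsmul ℝ,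
      smul_sub, inv_smul_smul₀ hκ, add_sub_assoc]
  simp only [recenter, Finset.sum_add_distrib, smul_add]
  rw [expect_norm_add_minibatch_sq_of_sum_eq_zero _ hμ]
  gcongr _ + _ * ∑ i, ?_ with i
  exact expect_norm_sub_sq_le_of_sum_sub_eq_zero (hμ i)

end Sampling

theorem inv_pow_mul_sum_eq_expect {m b n : ℕ} (φ : (Fin m → Fin b → Fin n) → ℝ) :
    ((n : ℝ) ^ (m * b))⁻¹ * ∑ ξ, φ ξ = 𝔼 ξ, φ ξ := by
  rw [Fintype.expect_eq_sum_div_card, div_eq_inv_mul]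
  simp [mul_comm m b, pow_mul]

section Gradient

variable {σ E : Type*} [Fintype σ] [NormedAddCommGroup E] [InnerProductSpace ℝ E]
  [CompleteSpace E]

theorem gradient_const_mul_sum {h : σ → E → ℝ} {x : E}
    (hh : ∀ j, DifferentiableAt ℝ (h j) x) (c : ℝ) :
    gradient (fun y => c * ∑ j, h j y) x = c • ∑ j, gradient (h j) x := by
  have hasDeriv : HasFDerivAt (fun y => c * ∑ j, h j y) (c • ∑ j, fderiv ℝ (h j) x) x :=
    (HasFDerivAt.fun_sum fun j _ => (hh j).hasFDerivAt).const_mul c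
  simp only [gradient, hasDeriv.fderiv, map_smulₛₗ, map_sum, conj_trivial]

theorem sum_gradient_sub_sub_gradient_mean_sub_eq_zero [Nonempty σ] {h : σ → E → ℝ}
    (hh : ∀ j, Differentiable ℝ (h j)) {H : E → ℝ}
    (hH : ∀ y, H y = (Fintype.card σ : ℝ)⁻¹ * ∑ j, h j y) (x y : E) :
    ∑ j, (gradient (h j) x - gradient (h j) y - (gradient H x - gradient H y)) = 0 := by
  have card_ne_zero : (Fintype.card σ : ℝ) ≠ 0 := Nat.cast_ne_zero.2 Fintype.card_ne_zero
  have gradient_mean (z : E) : (Fintype.card σ : ℝ) • gradient H z = ∑ j, gradient (h j) z := by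
    rw [funext hH, gradient_const_mul_sum (fun j => hh j z), smul_inv_smul₀ card_ne_zero]
  rw [Finset.sum_sub_distrib, Finset.sum_const, Finset.card_univ, ← Nat.cast_smul_eq_nsmul ℝ,
    smul_sub, gradient_mean, gradient_mean, Finset.sum_sub_distrib, sub_self]

end Gradient

theorem norm_sub_sq_le_three_mul {E : Type*} [SeminormedAddCommGroup E] (u v a c : E) :
    ‖u - v‖ ^ 2 ≤ 3 * (‖u - a‖ ^ 2 + ‖a - c‖ ^ 2 + ‖v - c‖ ^ 2) := by
  have triangle : ‖u - v‖ ≤ ‖u - a‖ + ‖a - c‖ + ‖v - c‖ := by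
    simpa only [dist_eq_norm, norm_sub_rev c v] using dist_triangle4 u a c v
  calc ‖u - v‖ ^ 2 ≤ (‖u - a‖ + ‖a - c‖ + ‖v - c‖) ^ 2 := by gcongr
    _ ≤ 3 * (‖u - a‖ ^ 2 + ‖a - c‖ ^ 2 + ‖v - c‖ ^ 2) := by
      simpa [Fin.sum_univ_three] using
        sq_sum_le_card_mul_sum_sq (s := Finset.univ) (f := ![‖u - a‖, ‖a - c‖, ‖v - c‖])

section Frobenius

variable {m : ℕ} {E : Type} [NormedAddCommGroup E]

theorem fnorm_sq (u : Fin m → E) : fnorm u ^ 2 = ∑ i, ‖u i‖ ^ 2 :=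
  Real.sq_sqrt (Finset.sum_nonneg fun _ _ => sq_nonneg _)

theorem fnorm_sub_sq_le_three_mul (u v : Fin m → E) (a c : E) :
    fnorm (u - v) ^ 2 ≤
      3 * (fnorm (u - fun _ => a) ^ 2 + m * ‖a - c‖ ^ 2 + fnorm (v - fun _ => c) ^ 2) := by
  simp only [fnorm_sq, Pi.sub_apply]
  calc ∑ i, ‖u i - v i‖ ^ 2
      ≤ ∑ i, 3 * (‖u i - a‖ ^ 2 + ‖a - c‖ ^ 2 + ‖v i - c‖ ^ 2) :=
        Finset.sum_le_sum fun i _ => norm_sub_sq_le_three_mul (u i) (v i) a c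
    _ = _ := by
        simp only [← Finset.mul_sum, Finset.sum_add_distrib, Finset.sum_const, Finset.card_univ,
          Fintype.card_fin, nsmul_eq_mul]

end Frobenius

theorem statement12_general {E : Type} [NormedAddCommGroup E] [InnerProductSpace ℝ E]
    [CompleteSpace E] (m n b : ℕ) (hm : 1 ≤ m) (hn : 1 ≤ n) (hb : 1 ≤ b) (L C : ℝ)
    (f : Fin m → Fin n → E → ℝ) (hdiff : ∀ i j, Differentiable ℝ (f i j))
    (havg : ∀ i, ∀ x x' : E,
      (n : ℝ)⁻¹ * ∑ j, ‖gradient (f i j) x - gradient (f i j) x'‖ ^ 2 ≤ L ^ 2 * ‖x - x'‖ ^ 2)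
    (fi : Fin m → E → ℝ) (hfi : ∀ i x, fi i x = (n : ℝ)⁻¹ * ∑ j, f i j x)
    (x xp g : Fin m → E) (hx : fnorm (x - fun _ => rowAvg x) ^ 2 ≤ C)
    (hxp : fnorm (xp - fun _ => rowAvg xp) ^ 2 ≤ 2 * C) :
    ((n : ℝ) ^ (m * b))⁻¹ * ∑ ξ : Fin m → Fin b → Fin n,
        ‖(m : ℝ)⁻¹ • ∑ i, (g i
            + (b : ℝ)⁻¹ • (∑ k, (gradient (f i (ξ i k)) (xp i) - gradient (f i (ξ i k)) (x i)))
            - gradient (fi i) (xp i))‖ ^ 2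
      ≤ ‖(m : ℝ)⁻¹ • ∑ i, (g i - gradient (fi i) (x i))‖ ^ 2
          + (9 * L ^ 2 / ((m : ℝ) ^ 2 * (b : ℝ))) * C
          + (3 * L ^ 2 / ((m : ℝ) * (b : ℝ))) * ‖rowAvg xp - rowAvg x‖ ^ 2 := by
  have : NeZero m := ⟨by lia⟩
  have : NeZero n := ⟨by lia⟩
  have : NeZero b := ⟨by lia⟩
  have displacement : fnorm (xp - x) ^ 2 ≤ 9 * C + 3 * m * ‖rowAvg xp - rowAvg x‖ ^ 2 := by
    linarith [fnorm_sub_sq_le_three_mul xp x (rowAvg xp) (rowAvg x)]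
  have recenter (i : Fin m) (v : E) : g i + v - gradient (fi i) (xp i) =
      g i - gradient (fi i) (x i) + v - (gradient (fi i) (xp i) - gradient (fi i) (x i)) := by
    abel
  simp only [inv_pow_mul_sum_eq_expect, recenter]
  calc _ ≤ ‖(m : ℝ)⁻¹ • ∑ i, (g i - gradient (fi i) (x i))‖ ^ 2 + ((m : ℝ) ^ 2 * b)⁻¹ *
          ∑ i, 𝔼 j, ‖gradient (f i j) (xp i) - gradient (f i j) (x i)‖ ^ 2 := by
        have h := expect_norm_minibatch_error_sq_le (κ := Fin b)
          (fun i => g i - gradient (fi i) (x i)) fun i =>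
            sum_gradient_sub_sub_gradient_mean_sub_eq_zero (hdiff i)
              (by simpa only [Fintype.card_fin] using hfi i) (xp i) (x i)
        simpa only [Fintype.card_fin] using h
    _ ≤ _ + ((m : ℝ) ^ 2 * b)⁻¹ * (L ^ 2 * fnorm (xp - x) ^ 2) := by
        gcongr
        rw [fnorm_sq, Finset.mul_sum]
        gcongr with i
        simpa only [Fintype.expect_eq_sum_div_card, Fintype.card_fin, div_eq_inv_mul,
          Pi.sub_apply] using havg i (xp i) (x i)
    _ ≤ _ + ((m : ℝ) ^ 2 * b)⁻¹ *
          (L ^ 2 * (9 * C + 3 * m * ‖rowAvg xp - rowAvg x‖ ^ 2)) := by gcongr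
    _ = _ := by
        field_simp
        ring

theorem statement12 (m n d b : ℕ) (hm : 1 ≤ m) (hn : 1 ≤ n) (hb : 1 ≤ b)
    (L η p : ℝ) (hη : 0 < η) (hp0 : 0 < p) (hp1 : p ≤ 1)
    (f : Fin m → Fin n → EuclideanSpace ℝ (Fin d) → ℝ)
    (hdiff : ∀ i j, Differentiable ℝ (f i j))
    (havg : ∀ i, ∀ x x' : EuclideanSpace ℝ (Fin d),
      (n : ℝ)⁻¹ * ∑ j, ‖gradient (f i j) x - gradient (f i j) x'‖ ^ 2 ≤ L ^ 2 * ‖x - x'‖ ^ 2)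
    (fi : Fin m → EuclideanSpace ℝ (Fin d) → ℝ)
    (hfi : ∀ i x, fi i x = (n : ℝ)⁻¹ * ∑ j, f i j x)
    (x xp g s : Fin m → EuclideanSpace ℝ (Fin d))
    (hcons : fnorm (xp - fun _ => rowAvg xp) ^ 2 ≤
      2 * (fnorm (x - fun _ => rowAvg x) ^ 2 + η ^ 2 * fnorm (s - fun _ => rowAvg s) ^ 2)) :
    (1 - p) * (((n : ℝ) ^ (m * b))⁻¹ * ∑ ξ : Fin m → Fin b → Fin n,
        ‖(m : ℝ)⁻¹ • ∑ i, (g i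
            + (b : ℝ)⁻¹ • (∑ k, (gradient (f i (ξ i k)) (xp i) - gradient (f i (ξ i k)) (x i)))
            - gradient (fi i) (xp i))‖ ^ 2)
      ≤ (1 - p) * (‖(m : ℝ)⁻¹ • ∑ i, (g i - gradient (fi i) (x i))‖ ^ 2
          + (9 * L ^ 2 / ((m : ℝ) ^ 2 * (b : ℝ))) *
              (fnorm (x - fun _ => rowAvg x) ^ 2 + η ^ 2 * fnorm (s - fun _ => rowAvg s) ^ 2)
          + (3 * L ^ 2 / ((m : ℝ) * (b : ℝ))) * ‖rowAvg xp - rowAvg x‖ ^ 2) :=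
  mul_le_mul_of_nonneg_left
    (statement12_general m n b hm hn hb L _ f hdiff havg fi hfi x xp g
      (le_add_of_nonneg_right (by positivity)) hcons)
    (sub_nonneg.2 hp1)
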